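/- For all integers J ≥ 0 and N ≥ 0: MO(−2, 25J+11; 25N+13) ≡ 0 (mod 5); MO(−2, 25J+24; 25N+22) ≡ 0 (mod 5); for each M ∈ {0, 1, 2, 5}, MO(−2, 49J+23; 49N+7M+11) ≡ 0 (mod 7); and for each M ∈ {2, 4, 5, 6}, MO(−2, 49J+48; 49N+7M+1) ≡ 0 (mod 7). -/

import Mathlib

/-!
In every term `p₋₃(k) · cm2(n, t)` of the sum one of the two factors is divisible by the prime
`p = 5` or `7`; no cancellation between terms is used.

* By Lucas' theorem (`dvd_cm2`), the stated residue of `t` modulo `p²` makes the second base-`p`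
  digit of `2t` equal to `p - 1`, which forces `cm2(n, t) ≡ 0` unless `n` is in one of two residue
  classes modulo `p²`, exchanged by `n ↦ -1 - n`. The triangular number of `n` is then fixed modulo
  `p²`, and hence so is `k`.
* For `p = 5` this leaves `k ≡ 22 (mod 25)`, and `5 ∣ p₋₃(25n + 22)` (`five_dvd_p3`). Writing
  `E = ∏ (1 - q^j)`, the generating function is `E^{-3} ≡ E² / E(q⁵)`. The coefficient of `q^a` in
  `E²` with `a ≡ 2 (mod 5)` vanishes unless `a ≡ 2 (mod 25)`: it is a signed count of Gaussian
  integers of norm `24a + 2`, and reflections built from `2 ± i` cancel them in pairs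
  (`circ_sum_eq_zero`). In the remaining terms the coefficient of `1 / E(q⁵)` is some `p(5m + 4)`.
* For `p = 7` this leaves `k ≡ 7l + 1 (mod 49)` with `l ∈ {2, 4, 5, 6}`, and then `7 ∣ p₋₃(k)`
  (`seven_dvd_p3`). Here `E^{-3} ≡ E⁴ / E(q⁷)`, and `E⁴`, a CM form for `ℚ(√-3)`, satisfies
  `[q^{7l+1}] E⁴ ≡ 3 [q^l] E⁴` (`seven_dvd_ellSum`), so `p₋₃(7l + 1) ≡ 3 [q^l] E³`. By Jacobi's
  identity this vanishes when `l` is not triangular modulo `7`, and also for `l ≡ 6`, where the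
  weight `2k + 1` is divisible by `7`.

Euler's pentagonal number theorem is in Mathlib; Jacobi's identity for `E³` is proved here from
its finite `q`-binomial form.
-/

open Finset

noncomputable section

/-- `p(k)`: the number of integer partitions of `k`. -/
def numPartitions (k : ℕ) : ℕ := Nat.card (Nat.Partition k)

/-- `pod(k)`: the number of partitions of `k` in which the odd parts are distinct
(even parts may repeat). -/
def pod (k : ℕ) : ℕ :=
  Nat.card {p : Nat.Partition k // ∀ i ∈ p.parts, Odd i → p.parts.count i ≤ 1}

/-- `p₋₃(k)`: the number of 3-colored partitions of `k`, i.e. ordered triples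
`(λ₁, λ₂, λ₃)` of partitions with `|λ₁| + |λ₂| + |λ₃| = k`. -/
def p3 (k : ℕ) : ℕ :=
  Nat.card {x : (Σ a : ℕ, Nat.Partition a) × (Σ a : ℕ, Nat.Partition a) ×
      (Σ a : ℕ, Nat.Partition a) // x.1.1 + x.2.1.1 + x.2.2.1 = k}

/-- `c1(n, t) = ∑_{k=0}^{n} (−1)^{n+k} (C(n+k+1, 2k+1) + C(n+k, 2k+1)) C(k, t) 3^{k−t}`
(for `k < t` the binomial `C(k, t)` vanishes, so the truncated exponent `k - t` is harmless). -/
def c1 (n t : ℕ) : ℤ :=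
  ∑ k ∈ Finset.range (n + 1),
    (-1 : ℤ) ^ (n + k) *
      (((n + k + 1).choose (2 * k + 1) : ℤ) + ((n + k).choose (2 * k + 1) : ℤ)) *
      (k.choose t : ℤ) * 3 ^ (k - t)

/-- `cm1(n, t) = ∑_{k=0}^{n} (−1)^{n+k} (C(n+k+1, 2k+1) + C(n+k, 2k+1)) C(k, t)`. -/
def cm1 (n t : ℕ) : ℤ :=
  ∑ k ∈ Finset.range (n + 1),
    (-1 : ℤ) ^ (n + k) *
      (((n + k + 1).choose (2 * k + 1) : ℤ) + ((n + k).choose (2 * k + 1) : ℤ)) *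
      (k.choose t : ℤ)

/-- `cm2(n, t) = (−1)^{n+t} (C(n+t, 2t) + 2 C(n+t, 2t+1))`. -/
def cm2 (n t : ℕ) : ℤ :=
  (-1 : ℤ) ^ (n + t) * (((n + t).choose (2 * t) : ℤ) + 2 * ((n + t).choose (2 * t + 1) : ℤ))

/-- `c0(n, t) = (−1)^{n+⌊(n+t)/2⌋} C(⌊(n+t)/2⌋, t)`. -/
def c0 (n t : ℕ) : ℤ :=
  (-1 : ℤ) ^ (n + (n + t) / 2) * (((n + t) / 2).choose t : ℤ)

/-- `MO(1, t; N) = ∑ p(k) · c1(n, t)`, summed over all pairs of nonnegative integers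
`(k, n)` with `3k + n(n+1)/2 = N` (all such pairs satisfy `k ≤ N` and `n ≤ N`). -/
def MO1 (t N : ℕ) : ℤ :=
  ∑ kn ∈ (Finset.range (N + 1) ×ˢ Finset.range (N + 1)).filter
      (fun kn => 3 * kn.1 + kn.2 * (kn.2 + 1) / 2 = N),
    (numPartitions kn.1 : ℤ) * c1 kn.2 t

/-- `MO(−1, t; N) = ∑ B̄₃(k) · cm1(n, t)`, summed over all pairs of nonnegative integers
`(k, n)` with `k + n(n+1)/2 = N`, where `B3` is the coefficient function of
`f₂ f₃ / (f₁² f₆)`. -/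
def MOm1 (B3 : ℕ → ℤ) (t N : ℕ) : ℤ :=
  ∑ kn ∈ (Finset.range (N + 1) ×ˢ Finset.range (N + 1)).filter
      (fun kn => kn.1 + kn.2 * (kn.2 + 1) / 2 = N),
    B3 kn.1 * cm1 kn.2 t

/-- `MO(2, t; N) = ∑ (−1)^k pod(k) · C(n+t, 2t)`, summed over all pairs of nonnegative
integers `(k, n)` with `k + n(n+1)/2 = N`. -/
def MO2 (t N : ℕ) : ℤ :=
  ∑ kn ∈ (Finset.range (N + 1) ×ˢ Finset.range (N + 1)).filter
      (fun kn => kn.1 + kn.2 * (kn.2 + 1) / 2 = N),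
    (-1 : ℤ) ^ kn.1 * (pod kn.1 : ℤ) * ((kn.2 + t).choose (2 * t) : ℤ)

/-- `MO(−2, t; N) = ∑ p₋₃(k) · cm2(n, t)`, summed over all pairs of nonnegative
integers `(k, n)` with `k + n(n+1)/2 = N`. -/
def MOm2 (t N : ℕ) : ℤ :=
  ∑ kn ∈ (Finset.range (N + 1) ×ˢ Finset.range (N + 1)).filter
      (fun kn => kn.1 + kn.2 * (kn.2 + 1) / 2 = N),
    (p3 kn.1 : ℤ) * cm2 kn.2 t

/-- `MO(0, t; N) = ∑ pod(k) · c0(n, t)`, summed over all pairs of nonnegative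
integers `(k, n)` with `k + n(n+1)/2 = N`. -/
def MO0 (t N : ℕ) : ℤ :=
  ∑ kn ∈ (Finset.range (N + 1) ×ˢ Finset.range (N + 1)).filter
      (fun kn => kn.1 + kn.2 * (kn.2 + 1) / 2 = N),
    (pod kn.1 : ℤ) * c0 kn.2 t

/-! ### Jacobi's identity -/

section Jacobi
open PowerSeries
variable (R : Type*) [CommRing R]

/-- The finite Euler product `(q; q)_n = ∏_{i=1}^n (1 - q^i)`. -/
def qPoch (n : ℕ) : PowerSeries R := ∏ i ∈ range n, (1 - X ^ (i + 1))

lemma constantCoeff_qPoch (n : ℕ) : constantCoeff (qPoch R n) = 1 := by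
  simp [qPoch, map_prod]

lemma qPoch_succ (n : ℕ) : qPoch R (n + 1) = qPoch R n * (1 - X ^ (n + 1)) := by
  simp [qPoch, prod_range_succ]

/-- `1 / (q; q)_{j-1}`, shifted so that the value `0` at `j = 0` extends the recurrence
`1 / (q; q)_{j-1} = (1 - q^j) / (q; q)_j` to `j = 0`. -/
def qPochInv : ℕ → PowerSeries R
  | 0 => 0
  | j + 1 => invOfUnit (qPoch R j) 1

lemma qPoch_mul_inv (j : ℕ) : qPoch R j * qPochInv R (j + 1) = 1 := by
  simp only [qPochInv]
  exact mul_invOfUnit _ _ (by simp [constantCoeff_qPoch])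

lemma qPochInv_rec (j : ℕ) : qPochInv R j = (1 - X ^ j) * qPochInv R (j + 1) := by
  cases j with
  | zero => simp [qPochInv]
  | succ j =>
    have h1 := qPoch_mul_inv R j
    have h2 := qPoch_mul_inv R (j + 1)
    rw [qPoch_succ] at h2
    linear_combination (-qPochInv R (j + 1)) * h2 +
      (1 - X ^ (j + 1)) * qPochInv R (j + 1 + 1) * h1

/-- The signed term `(-1)^k q^{k(k+1)/2} [2n+1 choose n-k]_q` of the finite Jacobi triple
product; it vanishes for `k > n`. -/
def jacTerm (n k : ℕ) : PowerSeries R :=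
  (-1) ^ k * X ^ (k * (k + 1) / 2) * qPoch R (2 * n + 1) *
    qPochInv R (n + 1 - k) * qPochInv R (n + k + 2)

lemma jacTerm_eq_zero {n k : ℕ} (h : n < k) : jacTerm R n k = 0 := by
  have : n + 1 - k = 0 := by omega
  simp [jacTerm, this, qPochInv]

lemma tri_succ (k : ℕ) : (k + 1) * (k + 1 + 1) / 2 = k * (k + 1) / 2 + (k + 1) := by
  have : (k + 1) * (k + 1 + 1) = k * (k + 1) + (k + 1) * 2 := by ring
  rw [this, Nat.add_mul_div_right _ _ (by norm_num)]

lemma qPoch_two (n : ℕ) : qPoch R (2 * (n + 1) + 1) =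
    qPoch R (2 * n + 1) * (1 - X ^ (2 * n + 2)) * (1 - X ^ (2 * n + 3)) := by
  rw [show 2 * (n + 1) + 1 = 2 * n + 1 + 1 + 1 by ring, qPoch_succ, qPoch_succ]

/-- The boundary case of `jacTerm_succ_succ`, with the coefficient at `k = -1` equal to minus the
one at `k = 0`. -/
lemma jacTerm_succ_zero (n : ℕ) : jacTerm R (n + 1) 0 =
    (1 + X ^ (2 * (n + 1))) * jacTerm R n 0 -
      X ^ (n + 1) * (jacTerm R n 1 - jacTerm R n 0) := by
  simp only [jacTerm, qPoch_two]
  have h1 := qPochInv_rec R n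
  have h2 := qPochInv_rec R (n + 1)
  have h3 := qPochInv_rec R (n + 2)
  simp only [pow_zero, zero_mul, Nat.zero_div, Nat.sub_zero, Nat.add_zero,
    Nat.add_sub_cancel, pow_one, show (1 * (1 + 1) / 2) = 1 from rfl]
  rw [show n + 1 + 2 = n + 3 by ring, show n + 2 + 1 = n + 3 by ring,
    show n + 1 + 1 = n + 2 by ring] at *
  rw [h1, h2, h3]
  ring

/-- Passing from `n` to `n + 1` multiplies the finite triple product by
`(1 - z q^(n+1)) (1 - z⁻¹ q^(n+1))`; this compares coefficients of powers of `z`. -/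
lemma jacTerm_succ_succ (n k : ℕ) : jacTerm R (n + 1) (k + 1) =
    (1 + X ^ (2 * (n + 1))) * jacTerm R n (k + 1) -
      X ^ (n + 1) * (jacTerm R n k + jacTerm R n (k + 2)) := by
  rcases lt_trichotomy k n with h | h | h
  · obtain ⟨j, rfl⟩ : ∃ j, n = k + 1 + j := ⟨n - k - 1, by omega⟩
    simp only [jacTerm, qPoch_two]
    rw [show k + 1 + j + 1 + 1 - (k + 1) = j + 2 by omega,
      show k + 1 + j + 1 - (k + 1) = j + 1 by omega,
      show k + 1 + j + 1 - k = j + 2 by omega,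
      show k + 1 + j + 1 - (k + 2) = j by omega,
      show k + 1 + j + 1 + (k + 1) + 2 = 2 * k + j + 3 + 1 + 1 by ring,
      show k + 1 + j + (k + 1) + 2 = 2 * k + j + 3 + 1 by ring,
      show k + 1 + j + k + 2 = 2 * k + j + 3 by ring,
      show k + 1 + j + (k + 2) + 2 = 2 * k + j + 3 + 1 + 1 by ring,
      tri_succ (k + 1), tri_succ k, qPochInv_rec R j, qPochInv_rec R (j + 1),
      qPochInv_rec R (2 * k + j + 3), qPochInv_rec R (2 * k + j + 3 + 1)]
    ring
  · subst h
    rw [jacTerm_eq_zero R (show k < k + 1 by omega), jacTerm_eq_zero R (show k < k + 2 by omega)]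
    simp only [jacTerm, qPoch_two]
    rw [show k + 1 + 1 - (k + 1) = 1 by omega, show k + 1 - k = 1 by omega,
      show k + 1 + (k + 1) + 2 = 2 * k + 2 + 1 + 1 by ring,
      show k + k + 2 = 2 * k + 2 by ring, tri_succ k, qPochInv_rec R (2 * k + 2),
      qPochInv_rec R (2 * k + 2 + 1)]
    ring
  · rw [jacTerm_eq_zero R (show n < k + 1 by omega), jacTerm_eq_zero R (show n < k + 2 by omega),
      jacTerm_eq_zero R h, jacTerm_eq_zero R (show n + 1 < k + 1 by omega)]
    ring

/-- The recurrence for the weighted sum truncated at `K`; the last term is the truncation error,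
which vanishes for `K > n`. -/
lemma jacSum_step (n K : ℕ) :
    ∑ k ∈ range (K + 1), (2 * (k : PowerSeries R) + 1) * jacTerm R (n + 1) k =
      (1 - X ^ (n + 1)) ^ 2 * ∑ k ∈ range (K + 1), (2 * (k : PowerSeries R) + 1) * jacTerm R n k -
      X ^ (n + 1) * ((2 * (K : PowerSeries R) + 1) * jacTerm R n (K + 1) -
        (2 * (K : PowerSeries R) + 3) * jacTerm R n K) := by
  induction K with
  | zero =>
    simp only [zero_add, sum_range_one, Nat.cast_zero, jacTerm_succ_zero]
    ring
  | succ K ih =>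
    rw [sum_range_succ, ih, sum_range_succ _ (K + 1), jacTerm_succ_succ]
    push_cast
    ring

/-- The finite form of Jacobi's identity: the derivative at `z = 1` of the finite triple product. -/
lemma jacSum_eq (n K : ℕ) (h : n ≤ K) :
    ∑ k ∈ range (K + 1), (2 * (k : PowerSeries R) + 1) * jacTerm R n k = qPoch R n ^ 2 := by
  induction n with
  | zero =>
    rw [sum_range_succ', sum_eq_zero]
    · have h0 := qPoch_mul_inv R 0
      have h1 := qPoch_mul_inv R 1
      simp only [qPoch, range_zero, prod_empty, one_mul] at h0
      simpa [jacTerm, h0, qPoch] using h1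
    · intro k _
      rw [jacTerm_eq_zero R (Nat.succ_pos k), mul_zero]
  | succ n ih =>
    rw [jacSum_step, ih (by omega), jacTerm_eq_zero R (show n < K + 1 by omega),
      jacTerm_eq_zero R (show n < K by omega), qPoch_succ]
    ring

lemma X_pow_dvd_prod_sub_one (n : ℕ) (s : Finset ℕ) (hs : ∀ i ∈ s, n ≤ i) :
    (X : PowerSeries R) ^ (n + 1) ∣ ∏ i ∈ s, (1 - X ^ (i + 1)) - 1 := by
  induction s using Finset.induction_on with
  | empty => simp
  | insert a s ha ih =>
    rw [prod_insert ha]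
    have h1 := ih fun i hi => hs i (mem_insert_of_mem hi)
    have h2 : (X : PowerSeries R) ^ (n + 1) ∣ X ^ (a + 1) :=
      pow_dvd_pow _ (by have := hs a (mem_insert_self a s); omega)
    have := dvd_sub h1 (h2.mul_right (∏ i ∈ s, (1 - X ^ (i + 1))))
    convert this using 1
    ring

/-- The Euler function agrees with its `n`-th partial product up to order `q^n`. -/
lemma X_pow_dvd_pentagonalSeries_sub (n : ℕ) :
    (X : PowerSeries R) ^ (n + 1) ∣ pentagonalSeries R - qPoch R n := by
  rw [X_pow_dvd_iff]
  intro d hd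
  obtain ⟨s, hs⟩ := Filter.eventually_atTop.1 (coeff_prod_one_sub_X_pow_eventually_eq R d)
  rw [map_sub, ← hs (s ∪ range n) subset_union_left, ← map_sub]
  have h := (X_pow_dvd_prod_sub_one R n ((s ∪ range n) \ range n) (by simp)).mul_left (qPoch R n)
  rw [X_pow_dvd_iff] at h
  rw [← h d hd, ← prod_sdiff (subset_union_right : range n ⊆ s ∪ range n)]
  congr 1
  rw [qPoch]
  ring

/-- **Jacobi's identity** `∏ (1 - q^j)^3 = ∑ (-1)^k (2k+1) q^{k(k+1)/2}`, coefficientwise. -/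
theorem coeff_pentagonalSeries_cube (N K : ℕ) (hK : 2 * N ≤ K) :
    coeff N (pentagonalSeries R ^ 3) = ∑ k ∈ range (K + 1),
      if k * (k + 1) / 2 = N then (-1 : R) ^ k * (2 * (k : R) + 1) else 0 := by
  set S : PowerSeries R := ∑ k ∈ range (K + 1),
    (2 * (k : PowerSeries R) + 1) * ((-1) ^ k * X ^ (k * (k + 1) / 2)) with hS
  have key : (X : PowerSeries R) ^ (N + 1) ∣ pentagonalSeries R ^ 3 - S := by
    rw [← Ideal.mem_span_singleton, ← Ideal.Quotient.eq]
    set φ := Ideal.Quotient.mk (Ideal.span {(X : PowerSeries R) ^ (N + 1)})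
    have hP : ∀ j, N ≤ j → φ (qPoch R j) = φ (pentagonalSeries R) := by
      intro j hj
      symm
      rw [Ideal.Quotient.eq, Ideal.mem_span_singleton]
      exact (pow_dvd_pow _ (by omega)).trans (X_pow_dvd_pentagonalSeries_sub R j)
    have hI : ∀ j, N ≤ j → φ (pentagonalSeries R) * φ (qPochInv R (j + 1)) = 1 := by
      intro j hj
      rw [← hP j hj, ← map_mul, qPoch_mul_inv, map_one]
    have h := congrArg φ (jacSum_eq R (2 * N) K hK)
    rw [map_pow, hP _ (by omega)] at h
    rw [map_pow, pow_succ _ 2, ← h, hS, map_sum, map_sum, sum_mul]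
    refine sum_congr rfl fun k _ => ?_
    rw [map_mul, map_mul, mul_assoc]
    congr 1
    simp only [jacTerm, map_mul]
    by_cases hk : N < k * (k + 1) / 2
    · have h0 : φ (X ^ (k * (k + 1) / 2)) = 0 :=
        Ideal.Quotient.eq_zero_iff_mem.2
          (Ideal.mem_span_singleton.2 (pow_dvd_pow _ (by omega)))
      simp [h0]
    · have hkN : k ≤ N := by
        have : k ≤ k * (k + 1) / 2 := by
          cases k with
          | zero => simp
          | succ k => rw [tri_succ]; omega
        omega
      have h1 := hI (2 * N - k) (by omega)
      have h2 := hI (2 * N + k + 1) (by omega)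
      rw [show 2 * N - k + 1 = 2 * N + 1 - k by omega] at h1
      rw [hP (2 * (2 * N) + 1) (by omega)]
      linear_combination φ ((-1) ^ k) * φ (X ^ (k * (k + 1) / 2)) *
        (φ (pentagonalSeries R) * φ (qPochInv R (2 * N + k + 2)) * h1 + h2)
  rw [X_pow_dvd_iff] at key
  have := key N (Nat.lt_succ_self N)
  rw [map_sub, sub_eq_zero] at this
  rw [this, hS, map_sum]
  refine sum_congr rfl fun k _ => ?_
  have e : (2 * (k : PowerSeries R) + 1) * ((-1) ^ k * X ^ (k * (k + 1) / 2)) =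
      C ((-1 : R) ^ k * (2 * (k : R) + 1)) * X ^ (k * (k + 1) / 2) := by
    simp only [map_mul, map_pow, map_neg, map_one, map_add, map_natCast, map_ofNat]
    ring
  rw [e, coeff_C_mul, coeff_X_pow]
  simp [eq_comm]

end Jacobi

/-! ### The generating function of 3-colored partitions -/

section Part
open PowerSeries
variable (R : Type*) [CommRing R]

/-- The generating function `∑ p(n) q^n` of the partition function. -/
def partSeries : PowerSeries R := mk fun n => (Fintype.card (Nat.Partition n) : R)

/-- Euler's product for the partition function, multiplied factor by factor with
`∏ (1 - q^j)`. -/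
lemma partSeries_mul_pentagonalSeries : partSeries R * pentagonalSeries R = 1 := by
  let _ : TopologicalSpace R := ⊥
  have _ : DiscreteTopology R := ⟨rfl⟩
  open scoped PowerSeries.WithPiTopology in
  have h1 := Nat.Partition.hasProd_powerSeriesMk_card_restricted R (fun _ => True)
  have h2 := PowerSeries.WithPiTopology.hasProd_one_sub_X_pow R
  have h3 := h1.mul h2
  have e : (PowerSeries.mk fun n ↦ (#(Nat.Partition.restricted n fun _ => True) : R)) =
      partSeries R := by
    simp [partSeries, Nat.Partition.restricted]
  rw [e] at h3
  refine h3.unique ?_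
  convert hasProd_one using 2 with i
  rw [if_pos trivial]
  simp_rw [pow_mul]
  rw [WithPiTopology.tsum_pow_mul_one_sub_of_constantCoeff_eq_zero (by simp)]

lemma coeff_partSeries_cube (k : ℕ) : coeff k (partSeries R ^ 3) = (p3 k : R) := by
  have key : p3 k = ∑ x ∈ antidiagonal k, ∑ y ∈ antidiagonal x.2,
      Fintype.card (Nat.Partition x.1) * (Fintype.card (Nat.Partition y.1) *
        Fintype.card (Nat.Partition y.2)) := by
    have e : {x : (Σ a : ℕ, Nat.Partition a) × (Σ a : ℕ, Nat.Partition a) ×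
        (Σ a : ℕ, Nat.Partition a) // x.1.1 + x.2.1.1 + x.2.2.1 = k} ≃
        Σ x : antidiagonal k, Σ y : antidiagonal x.1.2,
          Nat.Partition x.1.1 × Nat.Partition y.1.1 × Nat.Partition y.1.2 :=
      { toFun := fun x => ⟨⟨(x.1.1.1, x.1.2.1.1 + x.1.2.2.1), by
            have := x.2; rw [HasAntidiagonal.mem_antidiagonal]; dsimp only; omega⟩,
          ⟨(x.1.2.1.1, x.1.2.2.1), by rw [HasAntidiagonal.mem_antidiagonal]⟩,
          x.1.1.2, x.1.2.1.2, x.1.2.2.2⟩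
        invFun := fun z => ⟨(⟨z.1.1.1, z.2.2.1⟩, ⟨z.2.1.1.1, z.2.2.2.1⟩,
            ⟨z.2.1.1.2, z.2.2.2.2⟩), by
            have h1 := HasAntidiagonal.mem_antidiagonal.1 z.1.2
            have h2 := HasAntidiagonal.mem_antidiagonal.1 z.2.1.2
            dsimp only; omega⟩
        left_inv := fun x => rfl
        right_inv := by
          rintro ⟨⟨⟨a, b⟩, h1⟩, ⟨⟨c, d⟩, h2⟩, p, q, r⟩
          have h2' : c + d = b := HasAntidiagonal.mem_antidiagonal.1 h2
          subst h2'
          rfl }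
    rw [p3, Nat.card_congr e, Nat.card_eq_fintype_card]
    simp only [Fintype.card_sigma, Fintype.card_prod]
    rw [← Finset.sum_coe_sort (antidiagonal k)]
    refine sum_congr rfl fun x _ => ?_
    rw [← Finset.sum_coe_sort (antidiagonal x.1.2)]
  rw [key, pow_succ', sq, coeff_mul]
  push_cast
  refine sum_congr rfl fun x _ => ?_
  rw [coeff_mul, mul_sum]
  simp only [partSeries, coeff_mk]

end Part

/-! ### Frobenius on power series modulo a prime -/

section Frob
open PowerSeries

lemma pow_eq_expand (p : ℕ) [Fact p.Prime] (f : PowerSeries (ZMod p)) :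
    f ^ p = expand p (Fact.out : p.Prime).ne_zero f := by
  have := MvPowerSeries.map_frobenius_expand (σ := Unit) (R := ZMod p) p
    (Fact.out : p.Prime).ne_zero (f := f)
  rw [ZMod.frobenius_zmod] at this
  rw [expand, ← this]
  simp

end Frob

/-! ### Powers of the Euler function as sums over lattice points -/

section Lattice
open PowerSeries

/-- The sign `(-1)^i` for an integer `i`. -/
def sgn (i : ℤ) : ℤ := (Int.negOnePow i : ℤˣ)

lemma sgn_mul_sgn (i j : ℤ) : sgn i * sgn j = sgn (i + j) := by
  simp [sgn, Int.negOnePow_add]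

lemma sgn_congr {a b : ℤ} (h : Even (a - b)) : sgn a = sgn b := by
  simp only [sgn]
  rw [Int.negOnePow_eq_iff a b |>.2 h]

lemma sgn_neg_congr {a b : ℤ} (h : Odd (a - b)) : sgn a = -sgn b := by
  have : sgn a = sgn (b + 1) := sgn_congr (by obtain ⟨c, hc⟩ := h; exact ⟨c, by omega⟩)
  rw [this, ← sgn_mul_sgn]
  simp [sgn]

lemma sgn_ne_zero (a : ℤ) : sgn a ≠ 0 := Units.ne_zero _

lemma sgn_natCast (k : ℕ) : sgn k = (-1) ^ k := by
  simp [sgn, Int.negOnePow_def]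

/-- The triangular number `j(j+1)/2`, indexed by all integers; each value is attained exactly
twice, at `j` and `-1 - j`. -/
def tri (j : ℤ) : ℕ := (j * (j + 1) / 2).toNat

lemma two_mul_tri (j : ℤ) : 2 * (tri j : ℤ) = j * (j + 1) := by
  have h0 : 0 ≤ j * (j + 1) := by
    rcases le_or_gt 0 j with h | h <;> nlinarith
  have := Int.two_mul_ediv_two_of_even (Int.even_mul_succ_self j)
  rw [tri, Int.toNat_of_nonneg (by omega), this]

lemma tri_natCast (k : ℕ) : tri k = k * (k + 1) / 2 := by
  have h := two_mul_tri k
  have : 2 * tri k = k * (k + 1) := by exact_mod_cast h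
  omega

lemma tri_reflect (j : ℤ) : tri (-1 - j) = tri j := by
  have h1 := two_mul_tri j
  have h2 := two_mul_tri (-1 - j)
  have : (-1 - j) * (-1 - j + 1) = j * (j + 1) := by ring
  omega

lemma abs_le_pentagonal (i : ℤ) : |i| ≤ pentagonal i := by
  have h := two_mul_natCast_pentagonal i
  rcases le_or_gt i 0 with h0 | h0
  · rw [abs_of_nonpos h0]; nlinarith
  · rw [abs_of_pos h0]; nlinarith

lemma tri_bounds (j : ℤ) : -1 - tri j ≤ j ∧ j ≤ tri j := by
  have h := two_mul_tri j
  rcases le_or_gt 0 j with h0 | h0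
  · refine ⟨by omega, ?_⟩
    rcases eq_or_lt_of_le h0 with h1 | h1 <;> nlinarith
  · refine ⟨?_, by omega⟩
    rcases eq_or_lt_of_le (show j ≤ -1 by omega) with h1 | h1
    · omega
    · nlinarith

variable (R : Type*) [CommRing R]

lemma coeff_pentagonalSeries_eq_sum (u a : ℕ) (h : u ≤ a) :
    coeff u (pentagonalSeries R) =
      ∑ i ∈ Icc (-(a : ℤ)) a, if pentagonal i = u then (sgn i : R) else 0 := by
  by_cases hu : u ∈ Set.range pentagonal
  · obtain ⟨k, rfl⟩ := hu
    rw [sum_eq_single k]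
    · simp [sgn]
    · intro i _ hi
      rw [if_neg (by simpa using hi)]
    · intro hk
      have h1 := abs_le_pentagonal k
      have h2 := abs_le.1 h1
      exact absurd (mem_Icc.2 ⟨by omega, by omega⟩) hk
  · rw [coeff_pentagonalSeries_eq_zero R hu, sum_eq_zero]
    intro i _
    rw [if_neg fun e => hu ⟨i, e⟩]

lemma sum_Ico_neg (K : ℕ) (f : ℤ → R) :
    ∑ j ∈ Ico (-(K : ℤ)) K, f j = ∑ k ∈ range K, (f k + f (-1 - k)) := by
  induction K with
  | zero => simp
  | succ K ih =>
    have e : Ico (-((K + 1 : ℕ) : ℤ)) ((K + 1 : ℕ) : ℤ) =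
        insert (-1 - (K : ℤ)) (insert (K : ℤ) (Ico (-(K : ℤ)) K)) := by
      ext x
      simp only [mem_Ico, mem_insert]
      omega
    rw [e, sum_insert, sum_insert, ih, sum_range_succ]
    · ring
    · simp
    · simp only [mem_Ico, mem_insert]
      omega

lemma two_mul_coeff_cube (v a : ℕ) (h : v ≤ a) :
    2 * coeff v (pentagonalSeries R ^ 3) =
      ∑ j ∈ Ico (-((2 * a + 1 : ℕ) : ℤ)) (2 * a + 1 : ℕ),
        if tri j = v then ((sgn j * (2 * j + 1) : ℤ) : R) else 0 := by
  rw [sum_Ico_neg, coeff_pentagonalSeries_cube R v (2 * a) (by omega), mul_sum]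
  refine sum_congr rfl fun k _ => ?_
  rw [tri_reflect, ← tri_natCast]
  split_ifs
  · have e : sgn (-1 - k) = -sgn k := sgn_neg_congr ⟨-1 - k, by ring⟩
    rw [e, sgn_natCast]
    push_cast
    ring
  · simp

/-- The Cauchy product of two sparse series given by exponent functions. -/
lemma coeff_mul_of_sparse {f g : PowerSeries R} {I J : Finset ℤ} {α β : ℤ → ℕ} {s t : ℤ → ℤ}
    {a : ℕ} (hf : ∀ u ≤ a, coeff u f = ∑ i ∈ I, if α i = u then (s i : R) else 0)
    (hg : ∀ v ≤ a, coeff v g = ∑ j ∈ J, if β j = v then (t j : R) else 0) :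
    coeff a (f * g) =
      ((∑ x ∈ (I ×ˢ J) with α x.1 + β x.2 = a, s x.1 * t x.2 : ℤ) : R) := by
  rw [coeff_mul, sum_filter, sum_product]
  have : ∀ x ∈ HasAntidiagonal.antidiagonal a, coeff x.1 f * coeff x.2 g =
      ∑ i ∈ I, ∑ j ∈ J,
        (if α i = x.1 then (s i : R) else 0) * (if β j = x.2 then (t j : R) else 0) := by
    intro x hx
    have := HasAntidiagonal.mem_antidiagonal.1 hx
    rw [hf _ (by omega), hg _ (by omega), sum_mul_sum]
  rw [sum_congr rfl this, sum_comm]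
  push_cast
  refine sum_congr rfl fun i _ => ?_
  rw [sum_comm]
  refine sum_congr rfl fun j _ => ?_
  split_ifs with h
  · rw [sum_eq_single (α i, β j)]
    · simp
    · rintro ⟨u, v⟩ _ hne
      by_cases h1 : α i = u
      · by_cases h2 : β j = v
        · exact absurd (by rw [h1, h2]) hne
        · simp [h2]
      · simp [h1]
    · intro hn
      exact absurd (HasAntidiagonal.mem_antidiagonal.2 h) hn
  · refine sum_eq_zero ?_
    rintro ⟨u, v⟩ huv
    have huv := HasAntidiagonal.mem_antidiagonal.1 huv
    by_cases h1 : α i = u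
    · by_cases h2 : β j = v
      · simp only at huv; omega
      · simp [h2]
    · simp [h1]

/-- Pairs of indices of pentagonal numbers summing to `a`; with `x = 6i - 1`, `y = 6j - 1` these
are points of the circle `x^2 + y^2 = 24a + 2`. -/
def circ (a : ℕ) : Finset (ℤ × ℤ) :=
  (Icc (-(a : ℤ)) a ×ˢ Icc (-(a : ℤ)) a).filter fun x => pentagonal x.1 + pentagonal x.2 = a

lemma mem_circ {a : ℕ} {x : ℤ × ℤ} :
    x ∈ circ a ↔ x.1 * (3 * x.1 - 1) + x.2 * (3 * x.2 - 1) = 2 * a := by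
  have h1 := two_mul_natCast_pentagonal x.1
  have h2 := two_mul_natCast_pentagonal x.2
  have b1 := abs_le.1 (abs_le_pentagonal x.1)
  have b2 := abs_le.1 (abs_le_pentagonal x.2)
  rw [circ, mem_filter, mem_product, mem_Icc, mem_Icc, ← h1, ← h2]
  omega

/-- Pairs of indices `(i, j)` with `i(3i-1)/2 + j(j+1)/2 = a`; with `x = 6i - 1`, `y = 2j + 1`
these are points of the ellipse `x^2 + 3y^2 = 24a + 4`. -/
def ell (a : ℕ) : Finset (ℤ × ℤ) :=
  (Icc (-(a : ℤ)) a ×ˢ Ico (-((2 * a + 1 : ℕ) : ℤ)) (2 * a + 1 : ℕ)).filter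
    fun x => pentagonal x.1 + tri x.2 = a

lemma mem_ell {a : ℕ} {x : ℤ × ℤ} :
    x ∈ ell a ↔ x.1 * (3 * x.1 - 1) + x.2 * (x.2 + 1) = 2 * a := by
  have h1 := two_mul_natCast_pentagonal x.1
  have h2 := two_mul_tri x.2
  have b1 := abs_le.1 (abs_le_pentagonal x.1)
  have b2 := tri_bounds x.2
  rw [ell, mem_filter, mem_product, mem_Icc, mem_Ico, ← h1, ← h2]
  omega

lemma coeff_sq (a : ℕ) : coeff a (pentagonalSeries R ^ 2) =
    ((∑ x ∈ circ a, sgn x.1 * sgn x.2 : ℤ) : R) := by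
  rw [sq]
  exact coeff_mul_of_sparse R (fun u hu => coeff_pentagonalSeries_eq_sum R u a hu)
    (fun u hu => coeff_pentagonalSeries_eq_sum R u a hu)

/-- The weighted count of `ell a`, which is twice the coefficient of `q^a` in `∏ (1 - q^j)^4`. -/
def ellSum (a : ℕ) : ℤ := ∑ x ∈ ell a, sgn x.1 * (sgn x.2 * (2 * x.2 + 1))

lemma two_mul_coeff_four (a : ℕ) :
    2 * coeff a (pentagonalSeries R ^ 4) = (ellSum a : R) := by
  have : 2 * coeff a (pentagonalSeries R ^ 4) =
      coeff a (pentagonalSeries R * (C (2 : R) * pentagonalSeries R ^ 3)) := by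
    rw [mul_left_comm, ← pow_succ', coeff_C_mul]
  rw [this]
  refine coeff_mul_of_sparse R (t := fun j => sgn j * (2 * j + 1))
    (fun u hu => coeff_pentagonalSeries_eq_sum R u a hu) ?_
  intro v hv
  rw [coeff_C_mul]
  exact two_mul_coeff_cube R v a hv

/-- Exactly one of `2 ± i` divides a point of the circle when `5` exactly divides `24a + 2`. -/
lemma circ_cases {a : ℕ} (h5 : a % 5 = 2) (h25 : a % 25 ≠ 2) {i j : ℤ}
    (h : i * (3 * i - 1) + j * (3 * j - 1) = 2 * a) :
    ((j - 3 * i - 3) % 5 = 0 ∧ (i - 3 * j - 3) % 5 ≠ 0) ∨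
    ((j - 3 * i - 3) % 5 ≠ 0 ∧ (i - 3 * j - 3) % 5 = 0) := by
  obtain ⟨p, r, hr0, hr5, rfl⟩ : ∃ p r : ℤ, 0 ≤ r ∧ r < 5 ∧ i = 5 * p + r :=
    ⟨i / 5, i % 5, by omega, by omega, by omega⟩
  obtain ⟨q, s, hs0, hs5, rfl⟩ : ∃ p r : ℤ, 0 ≤ r ∧ r < 5 ∧ j = 5 * p + r :=
    ⟨j / 5, j % 5, by omega, by omega, by omega⟩
  interval_cases r <;> interval_cases s <;> ring_nf at h <;> omega

/-- When `5` exactly divides `24a + 2`, exactly one of the Gaussian primes `2 ± i` divides a given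
`z = x + yi` on the circle. The reflection `z ↦ -(2 + i)/(2 - i) z̄` in the first case, and
`z ↦ (2 - i)/(2 + i) z̄` in the second, is then integral, preserves the congruences
`x, y ≡ -1 (mod 6)`, and reverses the sign, so the points cancel in pairs. -/
lemma circ_sum_eq_zero {a : ℕ} (h5 : a % 5 = 2) (h25 : a % 25 ≠ 2) :
    ∑ x ∈ circ a, sgn x.1 * sgn x.2 = 0 := by
  have opp : ∀ x ∈ circ a, ∀ i j : ℤ,
      ((x.2 - 3 * x.1 - 3) % 5 = 0 ∧ i = (-3 * x.1 - 4 * x.2 + 2) / 5 ∧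
        j = (3 * x.2 - 4 * x.1 + 1) / 5) ∨
      ((x.1 - 3 * x.2 - 3) % 5 = 0 ∧ i = (3 * x.1 - 4 * x.2 + 1) / 5 ∧
        j = (-3 * x.2 - 4 * x.1 + 2) / 5) → sgn x.1 * sgn x.2 = -(sgn i * sgn j) := by
    intro x _ i j h
    rw [sgn_mul_sgn, sgn_mul_sgn]
    refine sgn_neg_congr (Int.odd_iff.2 ?_)
    omega
  have mem : ∀ x ∈ circ a, (if (x.2 - 3 * x.1 - 3) % 5 = 0 then
      ((-3 * x.1 - 4 * x.2 + 2) / 5, (3 * x.2 - 4 * x.1 + 1) / 5) else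
      ((3 * x.1 - 4 * x.2 + 1) / 5, (-3 * x.2 - 4 * x.1 + 2) / 5)) ∈ circ a := by
    intro x hx
    have hx' := mem_circ.1 hx
    have hc := circ_cases h5 h25 hx'
    rw [mem_circ]
    split_ifs with h
    · obtain ⟨j, hj⟩ : ∃ j, j = (3 * x.2 - 4 * x.1 + 1) / 5 := ⟨_, rfl⟩
      obtain ⟨i, hi⟩ : ∃ i, i = (-3 * x.1 - 4 * x.2 + 2) / 5 := ⟨_, rfl⟩
      dsimp only
      rw [← hi, ← hj]
      have ei : 5 * i = -3 * x.1 - 4 * x.2 + 2 := by omega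
      have ej : 5 * j = 3 * x.2 - 4 * x.1 + 1 := by omega
      have : 25 * (i * (3 * i - 1) + j * (3 * j - 1)) = 25 * (2 * a) := by
        rw [← hx']
        linear_combination (3 * (5 * i + (-3 * x.1 - 4 * x.2 + 2)) - 5) * ei +
          (3 * (5 * j + (3 * x.2 - 4 * x.1 + 1)) - 5) * ej
      omega
    · obtain ⟨j, hj⟩ : ∃ j, j = (-3 * x.2 - 4 * x.1 + 2) / 5 := ⟨_, rfl⟩
      obtain ⟨i, hi⟩ : ∃ i, i = (3 * x.1 - 4 * x.2 + 1) / 5 := ⟨_, rfl⟩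
      dsimp only
      rw [← hi, ← hj]
      have ei : 5 * i = 3 * x.1 - 4 * x.2 + 1 := by omega
      have ej : 5 * j = -3 * x.2 - 4 * x.1 + 2 := by omega
      have : 25 * (i * (3 * i - 1) + j * (3 * j - 1)) = 25 * (2 * a) := by
        rw [← hx']
        linear_combination (3 * (5 * i + (3 * x.1 - 4 * x.2 + 1)) - 5) * ei +
          (3 * (5 * j + (-3 * x.2 - 4 * x.1 + 2)) - 5) * ej
      omega
  refine sum_involution (fun x _ => if (x.2 - 3 * x.1 - 3) % 5 = 0 then
      ((-3 * x.1 - 4 * x.2 + 2) / 5, (3 * x.2 - 4 * x.1 + 1) / 5) else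
      ((3 * x.1 - 4 * x.2 + 1) / 5, (-3 * x.2 - 4 * x.1 + 2) / 5)) ?_ ?_ ?_ ?_
  · intro x hx
    have hc := circ_cases h5 h25 (mem_circ.1 hx)
    split_ifs with h
    · rw [opp x hx _ _ (Or.inl ⟨h, rfl, rfl⟩)]; ring
    · rw [opp x hx _ _ (Or.inr ⟨by omega, rfl, rfl⟩)]; ring
  · intro x hx hne heq
    have hc := circ_cases h5 h25 (mem_circ.1 hx)
    have : sgn x.1 * sgn x.2 = -(sgn x.1 * sgn x.2) := by
      split_ifs at heq with h
      · exact opp x hx _ _ (Or.inl ⟨h, (congrArg Prod.fst heq).symm, (congrArg Prod.snd heq).symm⟩)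
      · exact opp x hx _ _ (Or.inr ⟨by omega, (congrArg Prod.fst heq).symm,
          (congrArg Prod.snd heq).symm⟩)
    omega
  · exact mem
  · intro x hx
    have hc := circ_cases h5 h25 (mem_circ.1 hx)
    have hm := circ_cases h5 h25 (mem_circ.1 (mem x hx))
    by_cases h : (x.2 - 3 * x.1 - 3) % 5 = 0
    · simp only [if_pos h] at hm ⊢
      rw [if_pos (by omega)]
      ext <;> dsimp only <;> omega
    · simp only [if_neg h] at hm ⊢
      rw [if_neg (by omega)]
      ext <;> dsimp only <;> omega

lemma ell_reflect {a : ℕ} (f : ℤ → ℤ → ℤ) :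
    ∑ x ∈ ell a, f x.1 x.2 = ∑ x ∈ ell a, f x.1 (-1 - x.2) := by
  refine sum_nbij' (fun x => (x.1, -1 - x.2)) (fun x => (x.1, -1 - x.2)) ?_ ?_ ?_ ?_ ?_
  · intro x hx
    rw [mem_ell] at *
    rw [← hx]; ring
  · intro x hx
    rw [mem_ell] at *
    rw [← hx]; ring
  · intro x _; simp
  · intro x _; simp
  · intro x _; simp

/-- Since `7` divides `x^2 + 3y^2 = 24(7k+1) + 4`, one of `2 ± √-3` divides each point of
`ell (7k+1)`; the reflection `j ↦ -1 - j` is complex conjugation. -/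
lemma ell_cases {k : ℕ} {i j : ℤ}
    (h : i * (3 * i - 1) + j * (j + 1) = 2 * ((7 * k + 1 : ℕ) : ℤ)) :
    (j - 2 * i + 2) % 7 = 0 ∨ (-1 - j - 2 * i + 2) % 7 = 0 := by
  obtain ⟨p, r, hr0, hr5, rfl⟩ : ∃ p r : ℤ, 0 ≤ r ∧ r < 7 ∧ i = 7 * p + r :=
    ⟨i / 7, i % 7, by omega, by omega, by omega⟩
  obtain ⟨q, s, hs0, hs5, rfl⟩ : ∃ p r : ℤ, 0 ≤ r ∧ r < 7 ∧ j = 7 * p + r :=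
    ⟨j / 7, j % 7, by omega, by omega, by omega⟩
  push_cast at h
  interval_cases r <;> interval_cases s <;> ring_nf at h <;> omega

/-- With `z = x + y√-3`, the map `z ↦ (-2 + √-3) z̄` carries `ell k` onto the points of
`ell (7k+1)` divisible by `-2 + √-3`. It replaces the weight `y` by `x + 2y`, and `x` sums to zero
because `y ↦ -y` reverses the sign. -/
lemma ell_mult (k : ℕ) :
    ∑ x ∈ ell (7 * k + 1), (if (x.2 - 2 * x.1 + 2) % 7 = 0 then
      sgn x.1 * (sgn x.2 * (2 * x.2 + 1)) else 0) = -2 * ellSum k := by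
  have h1 : ∑ x ∈ ell (7 * k + 1), (if (x.2 - 2 * x.1 + 2) % 7 = 0 then
      sgn x.1 * (sgn x.2 * (2 * x.2 + 1)) else 0) =
      ∑ x ∈ ell k, -(sgn x.1 * (sgn x.2 * (6 * x.1 + 4 * x.2 + 1))) := by
    rw [← sum_filter]
    symm
    refine sum_nbij' (fun x => (x.2 + 1 - 2 * x.1, 3 * x.1 + 2 * x.2))
      (fun x => ((x.2 - 2 * x.1 + 2) / 7, (3 * x.1 - 3 + 2 * x.2) / 7)) ?_ ?_ ?_ ?_ ?_
    · intro x hx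
      rw [mem_ell] at hx
      rw [mem_filter, mem_ell]
      refine ⟨?_, ?_⟩
      · push_cast
        linear_combination 7 * hx
      · dsimp only; omega
    · intro x hx
      rw [mem_filter, mem_ell] at hx
      obtain ⟨hx, h7⟩ := hx
      rw [mem_ell]
      obtain ⟨i, hi⟩ : ∃ i, i = (x.2 - 2 * x.1 + 2) / 7 := ⟨_, rfl⟩
      obtain ⟨j, hj⟩ : ∃ j, j = (3 * x.1 - 3 + 2 * x.2) / 7 := ⟨_, rfl⟩
      dsimp only
      rw [← hi, ← hj]
      have ei : x.1 = j + 1 - 2 * i := by omega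
      have ej : x.2 = 3 * i + 2 * j := by omega
      rw [ei, ej] at hx
      push_cast at hx
      have : 7 * (i * (3 * i - 1) + j * (j + 1)) = 7 * (2 * k) := by
        linear_combination hx
      omega
    · intro x _; ext <;> dsimp only <;> omega
    · intro x hx
      rw [mem_filter] at hx
      ext <;> dsimp only <;> omega
    · intro x _
      dsimp only
      have e : sgn x.1 * sgn x.2 = -(sgn (x.2 + 1 - 2 * x.1) * sgn (3 * x.1 + 2 * x.2)) := by
        rw [sgn_mul_sgn, sgn_mul_sgn]
        exact sgn_neg_congr (Int.odd_iff.2 (by omega))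
      linear_combination (-(6 * x.1 + 4 * x.2 + 1)) * e
  have h2 : ∑ x ∈ ell k, sgn x.1 * (sgn x.2 * (6 * x.1 - 1)) = 0 := by
    have := ell_reflect (a := k) fun i j => sgn i * (sgn j * (6 * i - 1))
    have h3 : ∑ x ∈ ell k, sgn x.1 * (sgn (-1 - x.2) * (6 * x.1 - 1)) =
        -∑ x ∈ ell k, sgn x.1 * (sgn x.2 * (6 * x.1 - 1)) := by
      rw [← sum_neg_distrib]
      refine sum_congr rfl fun x _ => ?_
      rw [sgn_neg_congr (show Odd (-1 - x.2 - x.2) from ⟨-1 - x.2, by ring⟩)]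
      ring
    omega
  rw [h1, ← sub_zero (-2 * ellSum k), ← h2, ellSum, mul_sum, ← sum_sub_distrib]
  refine sum_congr rfl fun x _ => ?_
  ring

/-- The Hecke relation at `7` for `∏ (1 - q^j)^4`, whose `7`-th eigenvalue is `-4`, modulo `7`.
Points divisible by both `2 + √-3` and `2 - √-3` are counted twice, but their weight `y` is
divisible by `7`. -/
lemma seven_dvd_ellSum (k : ℕ) : (7 : ℤ) ∣ ellSum (7 * k + 1) + 4 * ellSum k := by
  have h1 := ell_mult k
  have h2 := ell_reflect (a := 7 * k + 1) fun i j => if (j - 2 * i + 2) % 7 = 0 then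
      sgn i * (sgn j * (2 * j + 1)) else 0
  rw [h1] at h2
  have : ellSum (7 * k + 1) + 4 * ellSum k = ∑ x ∈ ell (7 * k + 1),
      (sgn x.1 * (sgn x.2 * (2 * x.2 + 1)) -
        (if (x.2 - 2 * x.1 + 2) % 7 = 0 then sgn x.1 * (sgn x.2 * (2 * x.2 + 1)) else 0) -
        (if (-1 - x.2 - 2 * x.1 + 2) % 7 = 0 then
          sgn x.1 * (sgn (-1 - x.2) * (2 * (-1 - x.2) + 1)) else 0)) := by
    rw [sum_sub_distrib, sum_sub_distrib, h1, ← h2, ellSum]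
    ring
  rw [this]
  refine dvd_sum fun x hx => ?_
  rw [sgn_neg_congr (show Odd (-1 - x.2 - x.2) from ⟨-1 - x.2, by ring⟩)]
  rcases ell_cases (mem_ell.1 hx) with h | h
  · rw [if_pos h]
    split_ifs with h'
    · have : (7 : ℤ) ∣ 2 * x.2 + 1 := by omega
      obtain ⟨c, hc⟩ := this
      exact ⟨-(sgn x.1 * sgn x.2 * c), by linear_combination (-(sgn x.1 * sgn x.2)) * hc⟩
    · simp
  · rw [if_pos h]
    split_ifs with h'
    · have : (7 : ℤ) ∣ 2 * x.2 + 1 := by omega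
      obtain ⟨c, hc⟩ := this
      exact ⟨-(sgn x.1 * sgn x.2 * c), by linear_combination (-(sgn x.1 * sgn x.2)) * hc⟩
    · exact ⟨0, by ring⟩
end Lattice

/-! ### Congruences for 3-colored partitions -/

section Congruences
open PowerSeries

lemma coeff_mul_expand (p : ℕ) (hp : p ≠ 0) {R : Type*} [CommRing R] (f g : PowerSeries R)
    (n : ℕ) : coeff n (f * expand p hp g) = ∑ x ∈ HasAntidiagonal.antidiagonal n,
      if p ∣ x.2 then coeff x.1 f * coeff (x.2 / p) g else 0 := by
  rw [coeff_mul]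
  refine sum_congr rfl fun x _ => ?_
  rw [coeff_expand]
  split_ifs <;> simp

/-- By Jacobi's identity a coefficient of the cube vanishes modulo `p` if all its triangular
representations have weight `2k + 1` divisible by `p`. -/
lemma coeff_cube_eq_zero (p : ℕ) (v : ℕ)
    (h : ∀ k : ℕ, k * (k + 1) / 2 = v → p ∣ 2 * k + 1) :
    coeff v (pentagonalSeries (ZMod p) ^ 3) = 0 := by
  rw [coeff_pentagonalSeries_cube (ZMod p) v (2 * v) le_rfl]
  refine sum_eq_zero fun k _ => ?_
  split_ifs with hk
  · have := (ZMod.natCast_eq_zero_iff _ _).2 (h k hk)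
    push_cast at this
    rw [this, mul_zero]
  · rfl

lemma coeff_cube_five {v : ℕ} (h : v % 5 ≠ 0) (h' : v % 5 ≠ 1) :
    coeff v (pentagonalSeries (ZMod 5) ^ 3) = 0 := by
  refine coeff_cube_eq_zero 5 v fun k hk => ?_
  have e := Nat.even_mul_succ_self k
  have e2 : k * (k + 1) = 2 * v := by
    obtain ⟨c, hc⟩ := e
    omega
  obtain ⟨q, r, hr, rfl⟩ : ∃ q r, r < 5 ∧ k = 5 * q + r := ⟨k / 5, k % 5, by omega, by omega⟩
  interval_cases r <;> ring_nf at e2 <;> omega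

lemma coeff_cube_seven {v : ℕ} (h : v % 7 = 2 ∨ v % 7 = 4 ∨ v % 7 = 5 ∨ v % 7 = 6) :
    coeff v (pentagonalSeries (ZMod 7) ^ 3) = 0 := by
  refine coeff_cube_eq_zero 7 v fun k hk => ?_
  have e := Nat.even_mul_succ_self k
  have e2 : k * (k + 1) = 2 * v := by
    obtain ⟨c, hc⟩ := e
    omega
  obtain ⟨q, r, hr, rfl⟩ : ∃ q r, r < 7 ∧ k = 7 * q + r := ⟨k / 7, k % 7, by omega, by omega⟩
  interval_cases r <;> ring_nf at e2 <;> omega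

lemma coeff_pentagonalSeries_five {u : ℕ} (h : u % 5 = 3 ∨ u % 5 = 4) :
    coeff u (pentagonalSeries (ZMod 5)) = 0 := by
  refine coeff_pentagonalSeries_eq_zero _ ?_
  rintro ⟨i, rfl⟩
  have e := two_mul_natCast_pentagonal i
  obtain ⟨q, r, hr0, hr, rfl⟩ : ∃ q r : ℤ, 0 ≤ r ∧ r < 5 ∧ i = 5 * q + r :=
    ⟨i / 5, i % 5, by omega, by omega, by omega⟩
  generalize pentagonal _ = w at *
  interval_cases r <;> ring_nf at e <;> omega

/-- In `∏ (1 - q^j) · ∏ (1 - q^j)^3`, the exponents surviving modulo `5` lie in `{0, 1, 2}` and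
`{0, 1}` modulo `5`. -/
lemma coeff_four_five {a : ℕ} (h : a % 5 = 4) :
    coeff a (pentagonalSeries (ZMod 5) ^ 4) = 0 := by
  rw [pow_succ', coeff_mul]
  refine sum_eq_zero fun x hx => ?_
  have hx := HasAntidiagonal.mem_antidiagonal.1 hx
  by_cases h1 : x.1 % 5 = 3 ∨ x.1 % 5 = 4
  · rw [coeff_pentagonalSeries_five h1, zero_mul]
  · rw [coeff_cube_five (by omega) (by omega), mul_zero]

/-- **Ramanujan's congruence** `p(5n + 4) ≡ 0 (mod 5)`. -/
lemma coeff_partSeries_five {n : ℕ} (h : n % 5 = 4) : coeff n (partSeries (ZMod 5)) = 0 := by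
  have : Fact (Nat.Prime 5) := ⟨by norm_num⟩
  have e : partSeries (ZMod 5) = pentagonalSeries (ZMod 5) ^ 4 * expand 5 (by norm_num)
      (partSeries (ZMod 5)) := by
    rw [← pow_eq_expand]
    have := partSeries_mul_pentagonalSeries (ZMod 5)
    calc partSeries (ZMod 5)
        = (partSeries (ZMod 5) * pentagonalSeries (ZMod 5)) ^ 4 * partSeries (ZMod 5) := by
          rw [this]; ring
      _ = _ := by ring
  rw [e, coeff_mul_expand]
  refine sum_eq_zero fun x hx => ?_
  have hx := HasAntidiagonal.mem_antidiagonal.1 hx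
  split_ifs
  · rw [coeff_four_five (by omega), zero_mul]
  · rfl

/-- From `∏ (1 - q^j)^{-3} ≡ ∏ (1 - q^j)^2 · ∏ (1 - q^{5j})^{-1}`: a contributing exponent `a` of
the square is `2` modulo `5`; its coefficient vanishes unless `a ≡ 2 (mod 25)`, and then the other
factor is some `p(5m + 4)`. -/
lemma five_dvd_p3 {k : ℕ} (h : k % 25 = 22) : 5 ∣ p3 k := by
  have : Fact (Nat.Prime 5) := ⟨by norm_num⟩
  have e : partSeries (ZMod 5) ^ 3 = pentagonalSeries (ZMod 5) ^ 2 * expand 5 (by norm_num)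
      (partSeries (ZMod 5)) := by
    rw [← pow_eq_expand]
    have := partSeries_mul_pentagonalSeries (ZMod 5)
    calc partSeries (ZMod 5) ^ 3
        = (partSeries (ZMod 5) * pentagonalSeries (ZMod 5)) ^ 2 * partSeries (ZMod 5) ^ 3 := by
          rw [this]; ring
      _ = _ := by ring
  rw [← ZMod.natCast_eq_zero_iff, ← coeff_partSeries_cube, e, coeff_mul_expand]
  refine sum_eq_zero fun x hx => ?_
  have hx := HasAntidiagonal.mem_antidiagonal.1 hx
  split_ifs with h5
  · by_cases h25 : x.1 % 25 = 2
    · rw [coeff_partSeries_five (by omega), mul_zero]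
    · rw [coeff_sq, circ_sum_eq_zero (by omega) h25, Int.cast_zero, zero_mul]
  · rfl

/-- The Hecke relation at `7` modulo `7`, with the factor `2` removed. -/
lemma coeff_four_seven (k : ℕ) : coeff (7 * k + 1) (pentagonalSeries (ZMod 7) ^ 4) =
    3 * coeff k (pentagonalSeries (ZMod 7) ^ 4) := by
  have h := (ZMod.intCast_zmod_eq_zero_iff_dvd _ _).2 (seven_dvd_ellSum k)
  push_cast at h
  rw [← two_mul_coeff_four, ← two_mul_coeff_four] at h
  have h7 : (7 : ZMod 7) = 0 := rfl
  linear_combination 4 * h - (coeff (7 * k + 1) (pentagonalSeries (ZMod 7) ^ 4) +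
    5 * coeff k (pentagonalSeries (ZMod 7) ^ 4)) * h7

/-- From `∏ (1 - q^j)^{-3} ≡ ∏ (1 - q^j)^4 · ∏ (1 - q^{7j})^{-1}`: by the Hecke relation the terms
with exponent `7l + 1` sum to `3` times the coefficient of `q^l` in
`∏ (1 - q^j)^4 · ∏ (1 - q^j)^{-1}`, a cube to which Jacobi's identity applies. -/
lemma seven_dvd_p3 {l : ℕ} (h : l % 7 = 2 ∨ l % 7 = 4 ∨ l % 7 = 5 ∨ l % 7 = 6) :
    7 ∣ p3 (7 * l + 1) := by
  have : Fact (Nat.Prime 7) := ⟨by norm_num⟩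
  have hQ := partSeries_mul_pentagonalSeries (ZMod 7)
  have e : partSeries (ZMod 7) ^ 3 = pentagonalSeries (ZMod 7) ^ 4 * expand 7 (by norm_num)
      (partSeries (ZMod 7)) := by
    rw [← pow_eq_expand]
    calc partSeries (ZMod 7) ^ 3
        = (partSeries (ZMod 7) * pentagonalSeries (ZMod 7)) ^ 4 * partSeries (ZMod 7) ^ 3 := by
          rw [hQ]; ring
      _ = _ := by ring
  have e3 : pentagonalSeries (ZMod 7) ^ 3 = pentagonalSeries (ZMod 7) ^ 4 *
      partSeries (ZMod 7) := by
    linear_combination (-pentagonalSeries (ZMod 7) ^ 3) * hQ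
  rw [← ZMod.natCast_eq_zero_iff, ← coeff_partSeries_cube, e, coeff_mul_expand, ← sum_filter]
  have : 3 * coeff l (pentagonalSeries (ZMod 7) ^ 3) = 0 := by
    rw [coeff_cube_seven h, mul_zero]
  rw [← this, e3, coeff_mul, mul_sum]
  refine sum_nbij' (fun x => (x.1 / 7, x.2 / 7)) (fun x => (7 * x.1 + 1, 7 * x.2)) ?_ ?_ ?_ ?_ ?_
  · intro x hx
    rw [mem_filter, HasAntidiagonal.mem_antidiagonal] at hx
    rw [HasAntidiagonal.mem_antidiagonal]
    dsimp only; omega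
  · intro x hx
    rw [HasAntidiagonal.mem_antidiagonal] at hx
    rw [mem_filter, HasAntidiagonal.mem_antidiagonal]
    dsimp only; omega
  · intro x hx
    rw [mem_filter, HasAntidiagonal.mem_antidiagonal] at hx
    ext <;> dsimp only <;> omega
  · intro x hx
    ext <;> dsimp only <;> omega
  · intro x hx
    rw [mem_filter, HasAntidiagonal.mem_antidiagonal] at hx
    dsimp only
    rw [← mul_assoc, ← coeff_four_seven, show 7 * (x.1 / 7) + 1 = x.1 by omega]

end Congruences

/-! ### The binomial factor -/

/-- Lucas' theorem applied to the last two base-`p` digits. -/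
lemma choose_two_digits (p : ℕ) [Fact p.Prime] (m A d r : ℕ) (hd : d < p) (hr : r < p) :
    ((m.choose (p * (p * A + d) + r) : ℤ) : ZMod p) =
      (m % p).choose r * ((m / p % p).choose d * (m / p / p).choose A) := by
  have hp := (Fact.out : p.Prime).pos
  have key : ∀ m B s : ℕ, s < p →
      ((m.choose (p * B + s) : ℤ) : ZMod p) = (m % p).choose s * (m / p).choose B := by
    intro m B s hs
    have h := (ZMod.intCast_eq_intCast_iff _ _ _).2
      (Choose.choose_modEq_choose_mod_mul_choose_div (n := m) (k := p * B + s) (p := p))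
    rw [Nat.mul_add_mod, Nat.mod_eq_of_lt hs, Nat.mul_add_div hp, Nat.div_eq_of_lt hs,
      add_zero] at h
    rw [h]
    push_cast
    ring
  rw [key _ _ _ hr]
  have := key (m / p) A d hd
  push_cast at this
  rw [this]

/-- If the second base-`p` digit of `2t` is `p - 1`, then modulo `p` the coefficient `cm2 n t` has
the factor `C(m₁, p - 1) (C(m₀, r) + 2 C(m₀, r + 1))`, where `m₀` and `m₁` are the last two digits
of `n + t`. -/
lemma dvd_cm2 (p : ℕ) [Fact p.Prime] (n t A r : ℕ) (hr : r + 1 < p)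
    (ht : 2 * t = p * (p * A + (p - 1)) + r)
    (h : (n + t) / p % p ≠ p - 1 ∨
      p ∣ ((n + t) % p).choose r + 2 * ((n + t) % p).choose (r + 1)) :
    (p : ℤ) ∣ cm2 n t := by
  have hp := (Fact.out : p.Prime).pos
  refine Dvd.dvd.mul_left ?_ _
  rw [← ZMod.intCast_zmod_eq_zero_iff_dvd, Int.cast_add, Int.cast_mul, ht, add_assoc,
    choose_two_digits p _ A _ _ (by omega) (by omega),
    choose_two_digits p _ A _ _ (by omega) hr]
  rcases h with h | h
  · have : (n + t) / p % p < p := Nat.mod_lt _ hp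
    rw [Nat.choose_eq_zero_of_lt (show (n + t) / p % p < p - 1 by omega)]
    simp
  · have := (ZMod.natCast_eq_zero_iff _ _).2 h
    push_cast at this ⊢
    linear_combination (((n + t) / p % p).choose (p - 1) * ((n + t) / p / p).choose A : ZMod p)
      * this

lemma cm2_five_a (n J : ℕ) (h : ¬ (n % 25 = 11 ∨ n % 25 = 13)) :
    (5 : ℤ) ∣ cm2 n (25 * J + 11) := by
  have : Fact (Nat.Prime 5) := ⟨by norm_num⟩
  refine dvd_cm2 5 n _ (2 * J) 2 (by norm_num) (by omega) ?_
  by_contra! hc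
  obtain ⟨h1, h2⟩ := hc
  have : (n + (25 * J + 11)) % 5 < 5 := Nat.mod_lt _ (by norm_num)
  obtain ⟨x, hx⟩ : ∃ x, x = (n + (25 * J + 11)) % 5 := ⟨_, rfl⟩
  rw [← hx] at this h2
  interval_cases x <;> first | omega | exact h2 (by decide)

lemma cm2_five_b (n J : ℕ) (h : ¬ (n % 25 = 0 ∨ n % 25 = 24)) :
    (5 : ℤ) ∣ cm2 n (25 * J + 24) := by
  have : Fact (Nat.Prime 5) := ⟨by norm_num⟩
  refine dvd_cm2 5 n _ (2 * J + 1) 3 (by norm_num) (by omega) ?_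
  by_contra! hc
  obtain ⟨h1, h2⟩ := hc
  have : (n + (25 * J + 24)) % 5 < 5 := Nat.mod_lt _ (by norm_num)
  obtain ⟨x, hx⟩ : ∃ x, x = (n + (25 * J + 24)) % 5 := ⟨_, rfl⟩
  rw [← hx] at this h2
  interval_cases x <;> first | omega | exact h2 (by decide)

lemma cm2_seven_a (n J : ℕ) (h : ¬ (n % 49 = 23 ∨ n % 49 = 25)) :
    (7 : ℤ) ∣ cm2 n (49 * J + 23) := by
  have : Fact (Nat.Prime 7) := ⟨by norm_num⟩
  refine dvd_cm2 7 n _ (2 * J) 4 (by norm_num) (by omega) ?_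
  by_contra! hc
  obtain ⟨h1, h2⟩ := hc
  have : (n + (49 * J + 23)) % 7 < 7 := Nat.mod_lt _ (by norm_num)
  obtain ⟨x, hx⟩ : ∃ x, x = (n + (49 * J + 23)) % 7 := ⟨_, rfl⟩
  rw [← hx] at this h2
  interval_cases x <;> first | omega | exact h2 (by decide)

lemma cm2_seven_b (n J : ℕ) (h : ¬ (n % 49 = 0 ∨ n % 49 = 48)) :
    (7 : ℤ) ∣ cm2 n (49 * J + 48) := by
  have : Fact (Nat.Prime 7) := ⟨by norm_num⟩
  refine dvd_cm2 7 n _ (2 * J + 1) 5 (by norm_num) (by omega) ?_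
  by_contra! hc
  obtain ⟨h1, h2⟩ := hc
  have : (n + (49 * J + 48)) % 7 < 7 := Nat.mod_lt _ (by norm_num)
  obtain ⟨x, hx⟩ : ∃ x, x = (n + (49 * J + 48)) % 7 := ⟨_, rfl⟩
  rw [← hx] at this h2
  interval_cases x <;> first | omega | exact h2 (by decide)

/-! ### Combining the two factors -/

/-- Termwise divisibility: in each term of `MOm2`, either the binomial factor or the number of
3-colored partitions is divisible by `d`. The index relation is supplied without the division. -/
lemma dvd_MOm2 {d : ℕ} {t N : ℕ} (P : ℕ → Prop) (hc : ∀ n, ¬ P n → (d : ℤ) ∣ cm2 n t)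
    (hp : ∀ k n, P n → 2 * k + n * (n + 1) = 2 * N → d ∣ p3 k) : (d : ℤ) ∣ MOm2 t N := by
  refine dvd_sum fun x hx => ?_
  have hx := (mem_filter.1 hx).2
  by_cases hP : P x.2
  · obtain ⟨c, hc⟩ := Nat.even_mul_succ_self x.2
    refine Dvd.dvd.mul_right (Int.natCast_dvd_natCast.2 (hp x.1 x.2 hP ?_)) _
    omega
  · exact Dvd.dvd.mul_left (hc _ hP) _

/-- For odd `m`, the triangular number of `n` modulo `m` depends only on `n` modulo `m`. -/
lemma index_mod (m n r : ℕ) (hm : Odd m) (h : n % m = r) : ∃ c : ℕ,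
    n * (n + 1) = 2 * (m * c) + r * (r + 1) := by
  have hn := Nat.div_add_mod n m
  rw [h] at hn
  generalize n / m = s at *
  obtain ⟨a, rfl⟩ := hm
  obtain ⟨b, hb⟩ := Nat.even_mul_succ_self s
  refine ⟨a * (s * s) + b + r * s, ?_⟩
  subst hn
  zify at hb ⊢
  linear_combination (2 * (a : ℤ) + 1) * hb

theorem stmt16 (J N : ℕ) :
    (5 : ℤ) ∣ MOm2 (25 * J + 11) (25 * N + 13) ∧
    (5 : ℤ) ∣ MOm2 (25 * J + 24) (25 * N + 22) ∧
    (∀ M ∈ ({0, 1, 2, 5} : Finset ℕ), (7 : ℤ) ∣ MOm2 (49 * J + 23) (49 * N + 7 * M + 11)) ∧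
    (∀ M ∈ ({2, 4, 5, 6} : Finset ℕ), (7 : ℤ) ∣ MOm2 (49 * J + 48) (49 * N + 7 * M + 1)) := by
  refine ⟨?_, ?_, fun M hM => ?_, fun M hM => ?_⟩
  · refine dvd_MOm2 (d := 5) _ (fun n => cm2_five_a n J) fun k n hn h => five_dvd_p3 ?_
    rcases hn with hn | hn <;> obtain ⟨c, hc⟩ := index_mod 25 n _ (by decide) hn <;>
      omega
  · refine dvd_MOm2 (d := 5) _ (fun n => cm2_five_b n J) fun k n hn h => five_dvd_p3 ?_
    rcases hn with hn | hn <;> obtain ⟨c, hc⟩ := index_mod 25 n _ (by decide) hn <;>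
      omega
  · refine dvd_MOm2 (d := 7) _ (fun n => cm2_seven_a n J) fun k n hn h => ?_
    obtain ⟨l, hl, rfl⟩ : ∃ l, l % 7 = (M + 4) % 7 ∧ k = 7 * l + 1 := by
      refine ⟨k / 7, ?_⟩
      rcases hn with hn | hn <;> obtain ⟨c, hc⟩ := index_mod 49 n _ (by decide) hn <;>
        omega
    simp only [mem_insert, mem_singleton] at hM
    exact seven_dvd_p3 (by omega)
  · refine dvd_MOm2 (d := 7) _ (fun n => cm2_seven_b n J) fun k n hn h => ?_
    obtain ⟨l, hl, rfl⟩ : ∃ l, l % 7 = M % 7 ∧ k = 7 * l + 1 := by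
      refine ⟨k / 7, ?_⟩
      rcases hn with hn | hn <;> obtain ⟨c, hc⟩ := index_mod 49 n _ (by decide) hn <;>
        omega
    simp only [mem_insert, mem_singleton] at hM
    exact seven_dvd_p3 (by omega)
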